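/- arXiv:1506.08912 — 5 statements merged into one kernel-verified Lean document; each statement's English description precedes it below -/
import Mathlib

section
/- Let β ≥ 0 be real, let μ be a σ-finite measure on [0,∞), and for each n ∈ ℕ and each α ≥ 0 let φ_n(·,α) be a polynomial of degree n with real coefficients such that ∫_0^∞ φ_j(u,α) φ_k(u,α) u^α dμ(u) = ζ_k(α) δ_{jk} for all j,k ∈ ℕ and all α ≥ 0, where ζ_k(α) ∈ ℝ. Define f_{m,n}(z;β) = z^{m−n} φ_n(z·conj(z); m−n+β) for integers m ≥ n ≥ 0, and f_{m,n}(z;β) = conj(f_{n,m}(z;β)) for m < n. Then for all m,n,s,t ∈ ℕ the iterated integral ∫_0^∞ (1/(2π)) ∫_0^{2π} f_{m,n}(√u e^{iθ};β) · conj(f_{s,t}(√u e^{iθ};β)) dθ · u^β dμ(u) equals ζ_{min(m,n)}(|m−n|+β) δ_{ms} δ_{nt}. -/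
open MeasureTheory

/-!
On the circle of radius `r` the function `f_{m,n}` is a radial factor
`r^|m-n| φ_{min(m,n)}(r²; |m-n|+β)` times the character `e^{i(m-n)θ}`. The circle average of
`f_{m,n} · conj f_{s,t}` therefore vanishes unless `m - n = s - t`. If these differences agree, the
two radial powers at `r = √u` combine with the weight `u^β` to give `u^(|m-n|+β)`, and what is left
is the orthogonality relation of `φ_{min(m,n)}` and `φ_{min(s,t)}` with the common parameter
`|m-n|+β`; equal differences and equal minima force `(m, n) = (s, t)`.
-/

/-- `F` is a single Fourier mode in the angular variable: in polar coordinates about the origin,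
`F (r e^{iθ}) = R r · e^{ikθ}`, with frequency `k` and radial factor `R`. The identity is required
for all real `r`, including negative ones. -/
def HasAngularMode (F : ℂ → ℂ) (k : ℤ) (R : ℝ → ℂ) : Prop :=
  ∀ r θ : ℝ, F (circleMap 0 r θ) = R r * Complex.exp (k * Complex.I * θ)

namespace HasAngularMode

variable {F G : ℂ → ℂ} {k l : ℤ} {R S : ℝ → ℂ}

theorem mul (hF : HasAngularMode F k R) (hG : HasAngularMode G l S) :
    HasAngularMode (fun z ↦ F z * G z) (k + l) (fun r ↦ R r * S r) := by
  intro r θ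
  simp only [hF r θ, hG r θ, Int.cast_add, add_mul, Complex.exp_add]
  ring

theorem conj (hF : HasAngularMode F k R) :
    HasAngularMode (fun z ↦ starRingEnd ℂ (F z)) (-k) (fun r ↦ starRingEnd ℂ (R r)) := by
  intro r θ
  simp [hF r θ, ← Complex.exp_conj]

theorem pow (d : ℕ) : HasAngularMode (fun z ↦ z ^ d) d (fun r ↦ (r : ℂ) ^ d) := by
  intro r θ
  simp only [circleMap_zero, mul_pow, ← Complex.exp_nat_mul, Int.cast_natCast]
  ring_nf

theorem comp_normSq (g : ℝ → ℂ) :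
    HasAngularMode (fun z ↦ g (Complex.normSq z)) 0 (fun r ↦ g (r ^ 2)) := by
  intro r θ
  simp [Complex.normSq_eq_norm_sq]

theorem circleAverage_eq (hF : HasAngularMode F k R) (r : ℝ) :
    Real.circleAverage F 0 r = if k = 0 then R r else 0 := by
  simp only [Real.circleAverage_def, hF r, intervalIntegral.integral_const_mul]
  split_ifs with hk
  · simp only [hk, Int.cast_zero, zero_mul, Complex.exp_zero, intervalIntegral.integral_const,
      sub_zero, mul_smul_comm, mul_one, inv_smul_smul₀ Real.two_pi_pos.ne']
  · have hkI : (k : ℂ) * Complex.I ≠ 0 := mul_ne_zero (mod_cast hk) Complex.I_ne_zero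
    have hperiod : Complex.exp (k * Complex.I * (2 * Real.pi : ℝ)) = 1 :=
      Complex.exp_eq_one_iff.mpr ⟨k, by push_cast; ring⟩
    rw [integral_exp_mul_complex hkI, hperiod]
    simp

theorem circleAverage_mul_conj (hF : HasAngularMode F k R) (hG : HasAngularMode G l S) (r : ℝ) :
    Real.circleAverage (fun z ↦ F z * starRingEnd ℂ (G z)) 0 r =
      if k = l then R r * starRingEnd ℂ (S r) else 0 := by
  simpa only [← sub_eq_add_neg, sub_eq_zero] using (hF.mul hG.conj).circleAverage_eq r

end HasAngularMode

theorem rpow_mul_sqrt_pow_mul_sqrt_pow {u β : ℝ} (hu : 0 ≤ u) (hβ : 0 ≤ β) (d : ℕ) :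
    u ^ β * (√u ^ d * √u ^ d) = u ^ (d + β) := by
  rw [← mul_pow, Real.mul_self_sqrt hu, Real.rpow_add_of_nonneg hu d.cast_nonneg hβ,
    Real.rpow_natCast, mul_comm]

/-- `f m n` is the generalized 2D function `f_{m,n}(·; β)` built from functions `φ_n(·, α)` of a
real variable, polynomials or not; `φ n u α` stands for `φ_n(u, α)`. -/
structure IsGeneralized2D (φ : ℕ → ℝ → ℝ → ℝ) (β : ℝ) (f : ℕ → ℕ → ℂ → ℂ) : Prop where
  eq_of_le : ∀ m n : ℕ, n ≤ m → ∀ z : ℂ,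
    f m n z = z ^ (m - n) * ((φ n (Complex.normSq z) ((m : ℝ) - n + β) : ℝ) : ℂ)
  eq_conj_of_lt : ∀ m n : ℕ, m < n → ∀ z : ℂ, f m n z = starRingEnd ℂ (f n m z)

namespace IsGeneralized2D

variable {β : ℝ} {φ : ℕ → ℝ → ℝ → ℝ} {f : ℕ → ℕ → ℂ → ℂ}

theorem hasAngularMode_of_le (hf : IsGeneralized2D φ β f) {m n : ℕ} (hnm : n ≤ m) :
    HasAngularMode (f m n) (m - n) fun r ↦
      ((r ^ (m - n) * φ n (r ^ 2) ((m - n : ℕ) + β) : ℝ) : ℂ) := by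
  have hmode := (HasAngularMode.pow (m - n)).mul
    (HasAngularMode.comp_normSq fun x ↦ ((φ n x ((m - n : ℕ) + β) : ℝ) : ℂ))
  rw [funext (hf.eq_of_le m n hnm)]
  simpa [Nat.cast_sub hnm] using hmode

theorem hasAngularMode (hf : IsGeneralized2D φ β f) (m n : ℕ) :
    HasAngularMode (f m n) (m - n) fun r ↦
      ((r ^ (m - n : ℤ).natAbs *
        φ (min m n) (r ^ 2) ((m - n : ℤ).natAbs + β) : ℝ) : ℂ) := by
  rcases le_or_gt n m with hnm | hmn
  · have hdist : (m - n : ℤ).natAbs = m - n := by omega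
    simpa only [hdist, min_eq_right hnm] using hf.hasAngularMode_of_le hnm
  · have hdist : (m - n : ℤ).natAbs = n - m := by omega
    rw [funext (hf.eq_conj_of_lt m n hmn)]
    simpa only [hdist, min_eq_left hmn.le, neg_sub, Complex.conj_ofReal] using
      (hf.hasAngularMode_of_le hmn.le).conj

theorem rpow_smul_circleAverage (hf : IsGeneralized2D φ β f) (hβ : 0 ≤ β) {u : ℝ} (hu : 0 ≤ u)
    (m n s t : ℕ) :
    u ^ β • Real.circleAverage (fun z ↦ f m n z * starRingEnd ℂ (f s t z)) 0 √u =
      if (m - n : ℤ) = s - t then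
        ((φ (min m n) u ((m - n : ℤ).natAbs + β) * φ (min s t) u ((m - n : ℤ).natAbs + β) *
          u ^ ((m - n : ℤ).natAbs + β) : ℝ) : ℂ)
      else 0 := by
  rw [(hf.hasAngularMode m n).circleAverage_mul_conj (hf.hasAngularMode s t)]
  split_ifs with hfreq
  · rw [← hfreq, Real.sq_sqrt hu, ← rpow_mul_sqrt_pow_mul_sqrt_pow hu hβ, Complex.conj_ofReal,
      Complex.real_smul]
    push_cast
    ring
  · exact smul_zero _

end IsGeneralized2D

theorem intCast_sub_eq_sub_and_min_eq_min_iff {m n s t : ℕ} :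
    ((m - n : ℤ) = s - t ∧ min m n = min s t) ↔ m = s ∧ n = t := by
  omega

theorem generalized_2D_orthogonality_general {β : ℝ} (hβ : 0 ≤ β) {μ : Measure ℝ}
    {φ : ℕ → ℝ → ℝ → ℝ} {ζ : ℕ → ℝ → ℝ}
    (horth : ∀ j k d : ℕ,
      ∫ u in Set.Ici (0 : ℝ), φ j u (d + β) * φ k u (d + β) * u ^ (d + β) ∂μ
        = if j = k then ζ k (d + β) else 0)
    {f : ℕ → ℕ → ℂ → ℂ} (hf : IsGeneralized2D φ β f) (m n s t : ℕ) :
    ∫ u in Set.Ici (0 : ℝ),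
        u ^ β • Real.circleAverage (fun z ↦ f m n z * starRingEnd ℂ (f s t z)) 0 √u ∂μ
      = if m = s ∧ n = t then ((ζ (min m n) (|(m : ℝ) - n| + β) : ℝ) : ℂ) else 0 := by
  have hdist : ((m - n : ℤ).natAbs : ℝ) = |(m : ℝ) - n| := by
    simp [Nat.cast_natAbs]
  rw [setIntegral_congr_fun measurableSet_Ici
    fun u hu ↦ hf.rpow_smul_circleAverage hβ hu m n s t]
  by_cases hfreq : (m - n : ℤ) = s - t
  · simp only [hfreq, if_true]
    rw [integral_complex_ofReal, ← hfreq, horth, hdist]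
    by_cases hmin : min m n = min s t
    · rw [if_pos hmin, if_pos (intCast_sub_eq_sub_and_min_eq_min_iff.mp ⟨hfreq, hmin⟩), hmin]
    · rw [if_neg hmin, if_neg fun h ↦ hmin (intCast_sub_eq_sub_and_min_eq_min_iff.mpr h).2,
        Complex.ofReal_zero]
  · simp only [hfreq, if_false, integral_zero]
    rw [if_neg fun h ↦ hfreq (intCast_sub_eq_sub_and_min_eq_min_iff.mpr h).1]

/-- Orthogonality of the generalized 2D polynomials `f_{m,n}(z;β)` built from a system of
1D orthogonal polynomials `φ_n(·,α)` (the `N = ∞` case, with circle measure `dθ/(2π)`). -/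
theorem generalized_2D_orthogonality (β : ℝ) (hβ : 0 ≤ β)
    (μ : Measure ℝ) [SigmaFinite μ]
    (φ : ℕ → ℝ → ℝ → ℝ) (ζ : ℕ → ℝ → ℝ)
    (hpoly : ∀ (n : ℕ) (α : ℝ), 0 ≤ α →
      ∃ p : Polynomial ℝ, p.degree = n ∧ ∀ u : ℝ, φ n u α = p.eval u)
    (horth : ∀ (j k : ℕ) (α : ℝ), 0 ≤ α →
      ∫ u in Set.Ici (0 : ℝ), φ j u α * φ k u α * u ^ α ∂μ
        = if j = k then ζ k α else 0)
    (f : ℕ → ℕ → ℂ → ℂ)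
    (hf₁ : ∀ m n : ℕ, n ≤ m → ∀ z : ℂ,
      f m n z = z ^ (m - n) * ((φ n (Complex.normSq z) ((m : ℝ) - n + β) : ℝ) : ℂ))
    (hf₂ : ∀ m n : ℕ, m < n → ∀ z : ℂ, f m n z = starRingEnd ℂ (f n m z)) :
    ∀ m n s t : ℕ,
      (∫ u in Set.Ici (0 : ℝ),
          (u ^ β : ℝ) •
            ((2 * Real.pi)⁻¹ •
              ∫ θ in (0 : ℝ)..(2 * Real.pi),
                f m n ((Real.sqrt u : ℂ) * Complex.exp (θ * Complex.I)) *
                  starRingEnd ℂ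
                    (f s t ((Real.sqrt u : ℂ) * Complex.exp (θ * Complex.I)))) ∂μ)
        = (if m = s then 1 else 0) * (if n = t then 1 else 0) *
            ((ζ (min m n) (|(m : ℝ) - n| + β) : ℝ) : ℂ) := by
  intro m n s t
  simpa only [Real.circleAverage_def, circleMap_zero, ite_and, ite_mul, one_mul, zero_mul] using
    generalized_2D_orthogonality_general hβ (fun j k d ↦ horth j k (d + β) (by positivity))
      ⟨hf₁, hf₂⟩ m n s t
end

section
/- For every real β ≥ 0, all integers m > n ≥ 0, every nonzero z ∈ ℂ, and every w ∈ ℂ: (β/z)·Z^{(β)}_{m,n}(z,w) + ∂_z Z^{(β)}_{m,n}(z,w) = (β+m)·Z^{(β)}_{m−1,n}(z,w). (Action of the lowering operator a₁ = β/z + ∂_z on the 2D Laguerre polynomials.) -/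
open Finset

/-- Pochhammer symbol `(a)_j = a (a+1) ⋯ (a+j-1)`. -/
noncomputable def poch (a : ℝ) (j : ℕ) : ℝ := ∏ i ∈ Finset.range j, (a + i)

/-- The generalized 2D Laguerre polynomial `Z^{(β)}_{m,n}(z,w)` (for `m ≥ n`). -/
noncomputable def Zc (β : ℝ) (m n : ℕ) (z w : ℂ) : ℂ :=
  ∑ k ∈ Finset.range (n + 1),
    (((-1 : ℝ) ^ (n - k) * poch (β + 1) m /
        (k.factorial * (n - k).factorial * poch (β + 1) (m - k)) : ℝ) : ℂ) *
      z ^ (m - k) * w ^ (n - k)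

/-!
The operator `β / z + ∂_z` sends `z ^ a` to `(β + a) z ^ (a - 1)`, and the factor `β + a` with
`a = m - k` is the last factor of `(β + 1)_{m - k}`. Applied to `Z_{m,n}`, it therefore turns the
denominator `(β + 1)_{m - k}` into `(β + 1)_{m - 1 - k}`, while splitting `β + m` off
`(β + 1)_m` leaves `(β + 1)_{m - 1}`.
-/

theorem poch_succ (a : ℝ) (j : ℕ) : poch a (j + 1) = poch a j * (a + j) :=
  prod_range_succ _ j

/-- The coefficient of `z ^ (m - k) * w ^ (n - k)` in the 2D Laguerre polynomial
`Z^{(β)}_{m,n}(z,w)`, meaningful for `k ≤ n ≤ m`. It is the summand of `Zc` stripped of its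
monomial, kept real so that its recurrence in `m` is an identity over `ℝ`. -/
noncomputable def zcCoeff (β : ℝ) (m n k : ℕ) : ℝ :=
  (-1 : ℝ) ^ (n - k) * poch (β + 1) m / (k.factorial * (n - k).factorial * poch (β + 1) (m - k))

theorem Zc_eq_sum_zcCoeff (β : ℝ) (m n : ℕ) (z w : ℂ) :
    Zc β m n z w =
      ∑ k ∈ range (n + 1), (zcCoeff β m n k : ℂ) * z ^ (m - k) * w ^ (n - k) :=
  rfl

theorem add_mul_zcCoeff {β : ℝ} {m k : ℕ} (n : ℕ) (hk : k < m) (hβ : β + (m - k : ℕ) ≠ 0) :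
    (β + (m - k : ℕ)) * zcCoeff β m n k = (β + m) * zcCoeff β (m - 1) n k := by
  obtain ⟨j, rfl⟩ : ∃ j, m = k + j + 1 := Nat.exists_eq_add_of_lt hk
  have hsub : k + j + 1 - k = j + 1 := by lia
  have hlast (i : ℕ) : poch (β + 1) (i + 1) = poch (β + 1) i * (β + (i + 1 : ℕ)) := by
    rw [poch_succ]
    push_cast
    ring
  rw [hsub] at hβ
  simp only [zcCoeff, hsub, Nat.add_sub_cancel, Nat.add_sub_cancel_left, hlast]
  field_simp

theorem hasDerivAt_Zc (β : ℝ) (m n : ℕ) (z w : ℂ) :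
    HasDerivAt (fun z' => Zc β m n z' w)
      (∑ k ∈ range (n + 1),
        (zcCoeff β m n k : ℂ) * ((m - k : ℕ) * z ^ (m - k - 1)) * w ^ (n - k)) z :=
  HasDerivAt.fun_sum fun k _ => ((hasDerivAt_pow (m - k) z).const_mul _).mul_const _

theorem div_mul_pow_add_mul_pow_sub_one {K : Type*} [Field K] (b : K) {z : K} (hz : z ≠ 0)
    {a : ℕ} (ha : a ≠ 0) :
    b / z * z ^ a + a * z ^ (a - 1) = (b + a) * z ^ (a - 1) := by
  rw [← mul_pow_sub_one ha z]
  field_simp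

theorem lowering_a1_general {β : ℝ} {m n : ℕ} (hβ : ∀ j ∈ Icc 1 m, β + j ≠ 0) (hmn : n < m)
    {z : ℂ} (hz : z ≠ 0) (w : ℂ) :
    ((β : ℂ) / z) * Zc β m n z w + deriv (fun z' => Zc β m n z' w) z
      = ((β + m : ℝ) : ℂ) * Zc β (m - 1) n z w := by
  rw [(hasDerivAt_Zc β m n z w).deriv]
  simp only [Zc_eq_sum_zcCoeff, mul_sum, ← sum_add_distrib]
  refine sum_congr rfl fun k hk => ?_
  have hkm : k < m := by grind
  have hcoeff : ((β : ℂ) + (m - k : ℕ)) * zcCoeff β m n k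
      = ((β + m : ℝ) : ℂ) * zcCoeff β (m - 1) n k :=
    mod_cast add_mul_zcCoeff n hkm (hβ (m - k) (mem_Icc.2 (by lia)))
  have hmonomial := div_mul_pow_add_mul_pow_sub_one (β : ℂ) hz (Nat.sub_ne_zero_of_lt hkm)
  calc
    _ = zcCoeff β m n k * (β / z * z ^ (m - k) + (m - k : ℕ) * z ^ (m - k - 1)) * w ^ (n - k) := by
      ring
    _ = (β + (m - k : ℕ)) * zcCoeff β m n k * z ^ (m - k - 1) * w ^ (n - k) := by
      rw [hmonomial]
      ring
    _ = _ := by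
      rw [hcoeff, Nat.sub_right_comm]
      ring

/-- Action of the lowering operator `a₁ = β/z + ∂_z` on the 2D Laguerre polynomials:
`(β/z)·Z^{(β)}_{m,n}(z,w) + ∂_z Z^{(β)}_{m,n}(z,w) = (β+m)·Z^{(β)}_{m−1,n}(z,w)`. -/
theorem lowering_a1 (β : ℝ) (hβ : 0 ≤ β) (m n : ℕ) (hmn : n < m) (z : ℂ) (hz : z ≠ 0)
    (w : ℂ) :
    ((β : ℂ) / z) * Zc β m n z w + deriv (fun z' => Zc β m n z' w) z
      = ((β + m : ℝ) : ℂ) * Zc β (m - 1) n z w := by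
  exact lowering_a1_general (fun j hj =>
    (add_pos_of_nonneg_of_pos hβ (Nat.cast_pos.2 (mem_Icc.1 hj).1)).ne') hmn hz w
end

section
/- For every real β ≥ 0, all integers m ≥ n ≥ 0, and all z, w ∈ ℂ: z·Z^{(β)}_{m,n}(z,w) − ∂_w Z^{(β)}_{m,n}(z,w) = Z^{(β)}_{m+1,n}(z,w). (Action of the raising operator a₁† = z − ∂_w on the 2D Laguerre polynomials.) -/
open Finset

/-!
For `m = d + n` the 2D polynomial is a classical Laguerre polynomial in the product `z w`:
`Z^{(β)}_{d+n,n}(z,w) = z^d L_n^{(β+d)}(z w)`. The operator `z - ∂_w` therefore sends it to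
`z^{d+1} (L_n^{(α)} - (L_n^{(α)})')(z w)` with `α = β + d`, and `L_n^{(α)} - (L_n^{(α)})'` is
`L_n^{(α+1)}` because the coefficients of `L_n^{(α)}` are binomial and satisfy Pascal's rule.
-/

section Laguerre

open Polynomial

variable {K : Type*} [Field K] [CharZero K]

/-- The generalized Laguerre polynomial `L_n^{(α)}`. The binomial coefficient is the one of a
binomial ring, so that no value of `α` is exceptional. -/
noncomputable def laguerre (n : ℕ) (α : K) : K[X] :=
  ∑ j ∈ range (n + 1), C ((-1) ^ j / j.factorial * Ring.choose (α + n) (n - j)) * X ^ j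

lemma coeff_laguerre (n j : ℕ) (α : K) :
    (laguerre n α).coeff j =
      if j ≤ n then (-1) ^ j / j.factorial * Ring.choose (α + n) (n - j) else 0 := by
  simp only [laguerre, finsetSum_coeff, coeff_C_mul_X_pow, sum_ite_eq, mem_range_succ_iff]

lemma laguerre_zero (α : K) : laguerre 0 α = 1 := by
  simp [laguerre]

lemma derivative_laguerre_succ (n : ℕ) (α : K) :
    derivative (laguerre (n + 1) α) = -laguerre n (α + 1) := by
  ext j
  have hj : (j : K) + 1 ≠ 0 := j.cast_add_one_ne_zero
  have hparam : α + (n + 1 : ℕ) = α + 1 + n := by push_cast; ring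
  simp only [coeff_derivative, coeff_neg, coeff_laguerre, Nat.add_le_add_iff_right,
    Nat.add_sub_add_right, hparam, Nat.factorial_succ]
  split_ifs
  · push_cast
    field_simp
    ring
  · simp

lemma laguerre_succ_add_one (n : ℕ) (α : K) :
    laguerre (n + 1) (α + 1) = laguerre (n + 1) α + laguerre n (α + 1) := by
  have hparam : α + (n + 1 : ℕ) = α + 1 + n := by push_cast; ring
  ext j
  simp only [coeff_add, coeff_laguerre]
  rcases lt_trichotomy j (n + 1) with hlt | rfl | hgt
  · have hle : j ≤ n := Nat.lt_succ_iff.mp hlt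
    have pascal : Ring.choose (α + 1 + (n + 1 : ℕ)) (n - j + 1) =
        Ring.choose (α + 1 + n) (n - j) + Ring.choose (α + 1 + n) (n - j + 1) := by
      rw [Nat.cast_succ, ← add_assoc, Ring.choose_succ_succ]
    rw [if_pos hlt.le, if_pos hlt.le, if_pos hle, Nat.sub_add_comm hle, pascal, hparam]
    ring
  · simp
  · simp [hgt.not_ge, (Nat.lt_of_succ_lt hgt).not_ge]

lemma laguerre_sub_derivative (n : ℕ) (α : K) :
    laguerre n α - derivative (laguerre n α) = laguerre n (α + 1) := by
  cases n with
  | zero => simp [laguerre_zero]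
  | succ n => rw [derivative_laguerre_succ, laguerre_succ_add_one, sub_neg_eq_add]

end Laguerre

lemma poch_add (a : ℝ) (i k : ℕ) : poch a (i + k) = poch a i * poch (a + i) k := by
  simp only [poch, prod_range_add, Nat.cast_add, add_assoc]

lemma poch_ne_zero {a : ℝ} (ha : ∀ i : ℕ, a ≠ -i) (j : ℕ) : poch a j ≠ 0 :=
  prod_ne_zero_iff.mpr fun i _ => mt eq_neg_of_add_eq_zero_left (ha i)

lemma poch_eq_eval_ascPochhammer (a : ℝ) (k : ℕ) : poch a k = (ascPochhammer ℝ k).eval a := by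
  induction k with
  | zero => simp [poch]
  | succ k ih => rw [ascPochhammer_succ_eval, ← ih, poch, prod_range_succ, poch]

lemma poch_eq_factorial_mul_choose (a : ℝ) (k : ℕ) :
    poch a k = k.factorial * Ring.choose (a + k - 1) k := by
  rw [poch_eq_eval_ascPochhammer, ← Polynomial.ascPochhammer_smeval_eq_eval,
    ← Ring.factorial_nsmul_multichoose_eq_ascPochhammer, Ring.multichoose_eq, nsmul_eq_mul]

lemma poch_add_div_poch {a : ℝ} (ha : ∀ i : ℕ, a ≠ -i) (i k : ℕ) :
    poch a (i + k) / poch a i = k.factorial * Ring.choose (a + i + k - 1) k := by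
  rw [poch_add, mul_div_cancel_left₀ _ (poch_ne_zero ha i), poch_eq_factorial_mul_choose]

lemma Zc_coeff_eq_laguerre_coeff {β : ℝ} (hβ : ∀ i : ℕ, β + 1 ≠ -i) (d j k : ℕ) :
    (-1) ^ j * poch (β + 1) (d + j + k) / (k.factorial * j.factorial * poch (β + 1) (d + j)) =
      (-1) ^ j / j.factorial * Ring.choose (β + d + (j + k : ℕ)) k := by
  have hparam : β + 1 + (d + j : ℕ) + k - 1 = β + d + (j + k : ℕ) := by push_cast; ring
  have hratio := poch_add_div_poch hβ (d + j) k
  rw [hparam] at hratio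
  have hk : (k.factorial : ℝ) ≠ 0 := by positivity
  calc (-1) ^ j * poch (β + 1) (d + j + k) / (k.factorial * j.factorial * poch (β + 1) (d + j))
      = (-1) ^ j / j.factorial * (poch (β + 1) (d + j + k) / poch (β + 1) (d + j)) /
          k.factorial := by ring
    _ = (-1) ^ j / j.factorial * Ring.choose (β + d + (j + k : ℕ)) k := by
      rw [hratio]
      field_simp

lemma Zc_add_left_eq_laguerre {β : ℝ} (hβ : ∀ i : ℕ, β + 1 ≠ -i) (d n : ℕ) (z w : ℂ) :
    Zc β (d + n) n z w = z ^ d * Polynomial.aeval (z * w) (laguerre n (β + d)) := by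
  simp only [Zc, laguerre, map_sum, map_mul, Polynomial.aeval_C, map_pow, Polynomial.aeval_X,
    mul_sum]
  rw [← sum_range_reflect]
  refine sum_congr rfl fun j hj => ?_
  obtain ⟨k, rfl⟩ := Nat.exists_eq_add_of_le (mem_range_succ_iff.mp hj)
  have hreflect : j + k + 1 - 1 - j = k := by omega
  have hw : j + k - k = j := by omega
  have hz : d + (j + k) - k = d + j := by omega
  rw [hreflect, hw, hz, ← add_assoc d, Zc_coeff_eq_laguerre_coeff hβ, Nat.add_sub_cancel_left,
    Complex.coe_algebraMap]
  push_cast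
  ring

lemma hasDerivAt_Zc_add_left {β : ℝ} (hβ : ∀ i : ℕ, β + 1 ≠ -i) (d n : ℕ) (z w : ℂ) :
    HasDerivAt (fun w' => Zc β (d + n) n z w')
      (z ^ (d + 1) * Polynomial.aeval (z * w) (Polynomial.derivative (laguerre n (β + d)))) w := by
  simp only [Zc_add_left_eq_laguerre hβ]
  have hmul : HasDerivAt (fun w' => z * w') z w := by
    simpa using (hasDerivAt_id w).const_mul z
  have hchain := (((laguerre n (β + d)).hasDerivAt_aeval (z * w)).comp w hmul).const_mul (z ^ d)
  exact hchain.congr_deriv (by ring)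

theorem raising_a1_dagger_general {β : ℝ} (hβ : ∀ i : ℕ, β + 1 ≠ -i) {m n : ℕ} (hmn : n ≤ m)
    (z w : ℂ) :
    z * Zc β m n z w - deriv (fun w' => Zc β m n z w') w = Zc β (m + 1) n z w := by
  obtain ⟨d, rfl⟩ := Nat.exists_eq_add_of_le' hmn
  have hparam : β + (d + 1 : ℕ) = β + d + 1 := by push_cast; ring
  rw [(hasDerivAt_Zc_add_left hβ d n z w).deriv, Zc_add_left_eq_laguerre hβ, add_right_comm,
    Zc_add_left_eq_laguerre hβ, hparam, ← laguerre_sub_derivative, map_sub]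
  ring

/-- Action of the raising operator `a₁† = z − ∂_w` on the 2D Laguerre polynomials:
`z·Z^{(β)}_{m,n}(z,w) − ∂_w Z^{(β)}_{m,n}(z,w) = Z^{(β)}_{m+1,n}(z,w)`. -/
theorem raising_a1_dagger (β : ℝ) (hβ : 0 ≤ β) (m n : ℕ) (hmn : n ≤ m) (z w : ℂ) :
    z * Zc β m n z w - deriv (fun w' => Zc β m n z w') w = Zc β (m + 1) n z w :=
  raising_a1_dagger_general (fun i => by have := i.cast_nonneg (α := ℝ); linarith) hmn z w
end

section
/- For every real β ≥ 0, all integers m ≥ n ≥ 0, and every quaternion q ∈ ℍ with conjugate q̄: Z^{(β)}_{m+1,n}(q,q̄) = q · Z^{(β+1)}_{m,n}(q,q̄). -/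
/-! As `(a)_{j+1} = a (a+1)_j`, the factor `β + 1` cancels from the quotient
`(β+1)_{m+1} / (β+1)_{m+1-k}`, so the two sides have the same coefficients. For `k ≤ n ≤ m` the
power `q^{m+1-k}` has a positive exponent, which lets one factor `q` be taken out on the left. -/

open Finset Quaternion

/-- The quaternionic 2D Laguerre polynomial `Z^{(β)}_{m,n}(q,q̄)` (for `m ≥ n`). -/
noncomputable def Zq (β : ℝ) (m n : ℕ) (q : ℍ[ℝ]) : ℍ[ℝ] :=
  ∑ k ∈ Finset.range (n + 1),
    ((-1 : ℝ) ^ (n - k) * poch (β + 1) m /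
        (k.factorial * (n - k).factorial * poch (β + 1) (m - k))) •
      (q ^ (m - k) * (star q) ^ (n - k))

theorem poch_pos {a : ℝ} (ha : 0 < a) (j : ℕ) : 0 < poch a j :=
  prod_pos fun i _ => add_pos_of_pos_of_nonneg ha i.cast_nonneg

theorem poch_succ_left (a : ℝ) (j : ℕ) : poch a (j + 1) = a * poch (a + 1) j := by
  simp only [poch, prod_range_succ', Nat.cast_succ, Nat.cast_zero, add_zero, add_assoc,
    add_comm (1 : ℝ), mul_comm a]

theorem poch_succ_div_poch_succ {a : ℝ} (ha : a ≠ 0) (i j : ℕ) :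
    poch a (i + 1) / poch a (j + 1) = poch (a + 1) i / poch (a + 1) j := by
  rw [poch_succ_left, poch_succ_left, mul_div_mul_left _ _ ha]

/-- The coefficient of `x^{m-k} y^{n-k}` in the 2D Laguerre polynomial with parameter `β`,
meant for `k ≤ min m n` because of the truncated subtractions. -/
noncomputable def laguerreCoeff (β : ℝ) (m n k : ℕ) : ℝ :=
  (-1 : ℝ) ^ (n - k) * poch (β + 1) m /
    (k.factorial * (n - k).factorial * poch (β + 1) (m - k))

theorem laguerreCoeff_succ_left {β : ℝ} (hβ : β + 1 ≠ 0) {m k : ℕ} (hkm : k ≤ m) (n : ℕ) :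
    laguerreCoeff β (m + 1) n k = laguerreCoeff (β + 1) m n k := by
  rw [laguerreCoeff, laguerreCoeff, Nat.succ_sub hkm, mul_div_mul_comm,
    poch_succ_div_poch_succ hβ, ← mul_div_mul_comm]

/-- The 2D Laguerre polynomial `Z^{(β)}_{m,n}(x,y)` (for `m ≥ n`), evaluated at two elements of a
real algebra with the powers of `x` to the left of those of `y`; `Zq` is the case `y = star x`
in the quaternions. -/
noncomputable def laguerreTwoVar {A : Type*} [Semiring A] [Algebra ℝ A] (β : ℝ) (m n : ℕ)
    (x y : A) : A :=
  ∑ k ∈ range (n + 1), laguerreCoeff β m n k • (x ^ (m - k) * y ^ (n - k))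

-- The hypothesis on `poch` says that no denominator in the two polynomials vanishes.
theorem quat_recurrence_beta_shift_general {A : Type*} [Semiring A] [Algebra ℝ A] {β : ℝ}
    {m n : ℕ} (hβ : poch (β + 1) (m + 1) ≠ 0) (hmn : n ≤ m) (x y : A) :
    laguerreTwoVar β (m + 1) n x y = x * laguerreTwoVar (β + 1) m n x y := by
  have hβ_ne : β + 1 ≠ 0 := left_ne_zero_of_mul (poch_succ_left (β + 1) m ▸ hβ)
  rw [laguerreTwoVar, laguerreTwoVar, mul_sum]
  refine sum_congr rfl fun k hk => ?_
  have hkm : k ≤ m := (mem_range_succ_iff.mp hk).trans hmn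
  rw [laguerreCoeff_succ_left hβ_ne hkm, Nat.succ_sub hkm, pow_succ', mul_assoc, mul_smul_comm]

/-- Recurrence `Z^{(β)}_{m+1,n}(q,q̄) = q · Z^{(β+1)}_{m,n}(q,q̄)`. -/
theorem quat_recurrence_beta_shift (β : ℝ) (hβ : 0 ≤ β) (m n : ℕ) (hmn : n ≤ m)
    (q : ℍ[ℝ]) :
    Zq β (m + 1) n q = q * Zq (β + 1) m n q :=
  quat_recurrence_beta_shift_general (poch_pos (add_pos_of_nonneg_of_pos hβ one_pos) _).ne' hmn
    q (star q)
end

section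
/- For every real β ≥ 0, all integers m ≥ n ≥ 1, and all z, w ∈ ℂ: z · ∂_z Z^{(β)}_{m,n}(z,w) = (m−n) · Z^{(β)}_{m,n}(z,w) − w · Z^{(β)}_{m,n−1}(z,w). (Complex-variable form of the differential recurrence q ∂_q Z = (m−n)Z − q̄ Z_{m,n−1}, whose quaternionic version holds with the Cullen derivative.) -/
/-!
Only the factor `(-w)^j / j!` of `Z_{m,n}` depends on `n`: up to the weights `a_k`, `Z_{m,n}` is the
coefficient of `t^n` in `F = A(z,t) exp(-wt)`, where `A(z,t) = ∑ a_k z^(m-k) t^k` is homogeneous of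
degree `m`. Euler's identity `z ∂_z A + t ∂_t A = m A` gives
`z ∂_z F = m F - t ∂_t F - w t F`, and the coefficient of `t^n` is the recurrence.
-/

open Finset

section AppellSum

variable {𝕜 : Type*}

theorem succ_mul_pow_div_factorial [Field 𝕜] [CharZero 𝕜] (x : 𝕜) (j : ℕ) :
    ((j + 1 : ℕ) : 𝕜) * (x ^ (j + 1) / (j + 1).factorial) = x * (x ^ j / j.factorial) := by
  have hj : ((j + 1 : ℕ) : 𝕜) ≠ 0 := Nat.cast_ne_zero.mpr j.succ_ne_zero
  rw [Nat.factorial_succ, Nat.cast_mul, mul_div_assoc', mul_div_mul_left _ _ hj, pow_succ',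
    mul_div_assoc]

theorem mul_deriv_sum_mul_pow [NontriviallyNormedField 𝕜] {ι : Type*} (s : Finset ι)
    (c : ι → 𝕜) (e : ι → ℕ) (z : 𝕜) :
    z * deriv (fun z' => ∑ i ∈ s, c i * z' ^ e i) z = ∑ i ∈ s, e i * (c i * z ^ e i) := by
  have hderiv : HasDerivAt (fun z' => ∑ i ∈ s, c i * z' ^ e i)
      (∑ i ∈ s, c i * (e i * z ^ (e i - 1))) z :=
    HasDerivAt.fun_sum fun i _ => (hasDerivAt_pow (e i) z).const_mul (c i)
  rw [hderiv.deriv, Finset.mul_sum]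
  refine Finset.sum_congr rfl fun i _ => ?_
  rcases Nat.eq_zero_or_pos (e i) with he | he
  · simp [he]
  · rw [← mul_pow_sub_one he.ne' z]
    ring

/-- The sum `∑_{k+j=n} a_k (-w)^j / j! z^(m-k)`, that is, the coefficient of `t^n` in
`(∑_k a_k z^(m-k) t^k) exp(-wt)`. It is meant for `n ≤ m`, where `m - k` is not truncated. As
functions of `w` these sums satisfy Appell's relation `∂_w S_n = -S_{n-1}`. -/
noncomputable def appellSum [Field 𝕜] (a : ℕ → 𝕜) (m n : ℕ) (z w : 𝕜) : 𝕜 :=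
  ∑ p ∈ antidiagonal n, a p.1 * ((-w) ^ p.2 / p.2.factorial) * z ^ (m - p.1)

theorem sum_antidiagonal_snd_mul_appellSum_term [Field 𝕜] [CharZero 𝕜] (a : ℕ → 𝕜) (m n : ℕ)
    (z w : 𝕜) :
    ∑ p ∈ antidiagonal (n + 1),
        (p.2 : 𝕜) * (a p.1 * ((-w) ^ p.2 / p.2.factorial) * z ^ (m - p.1))
      = -w * appellSum a m n z w := by
  rw [Finset.Nat.sum_antidiagonal_succ', Nat.cast_zero, zero_mul, zero_add, appellSum,
    Finset.mul_sum]
  refine Finset.sum_congr rfl fun p _ => ?_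
  linear_combination a p.1 * z ^ (m - p.1) * succ_mul_pow_div_factorial (-w) p.2

theorem diff_recurrence_z_general [NontriviallyNormedField 𝕜] [CharZero 𝕜] (a : ℕ → 𝕜)
    {m n : ℕ} (hnm : n + 1 ≤ m) (z w : 𝕜) :
    z * deriv (fun z' => appellSum a m (n + 1) z' w) z
      = ((m : 𝕜) - (n + 1 : ℕ)) * appellSum a m (n + 1) z w - w * appellSum a m n z w := by
  have hexponent : ∀ p ∈ antidiagonal (n + 1),
      ((m - p.1 : ℕ) : 𝕜) = ((m : 𝕜) - (n + 1 : ℕ)) + p.2 := by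
    intro p hp
    have hsum : p.1 + p.2 = n + 1 := mem_antidiagonal.mp hp
    rw [Nat.cast_sub (by lia), ← hsum, Nat.cast_add]
    ring
  calc z * deriv (fun z' => appellSum a m (n + 1) z' w) z
      = ∑ p ∈ antidiagonal (n + 1),
          ((m - p.1 : ℕ) : 𝕜) * (a p.1 * ((-w) ^ p.2 / p.2.factorial) * z ^ (m - p.1)) :=
        mul_deriv_sum_mul_pow _ _ _ z
    _ = ((m : 𝕜) - (n + 1 : ℕ)) * appellSum a m (n + 1) z w + -w * appellSum a m n z w := by
        rw [← sum_antidiagonal_snd_mul_appellSum_term, appellSum, Finset.mul_sum,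
          ← Finset.sum_add_distrib]
        exact Finset.sum_congr rfl fun p hp => by rw [hexponent p hp, add_mul]
    _ = ((m : 𝕜) - (n + 1 : ℕ)) * appellSum a m (n + 1) z w - w * appellSum a m n z w := by
        ring

end AppellSum

/-- The part `(β+1)_m / (k! (β+1)_{m-k})` of the coefficients of `Z^{(β)}_{m,n}` that does not
depend on `n`; these are the weights that make `Z^{(β)}_{m,n}` an `appellSum`. -/
noncomputable def laguerreWeight (β : ℝ) (m k : ℕ) : ℝ :=
  poch (β + 1) m / (k.factorial * poch (β + 1) (m - k))

theorem Zc_eq_appellSum (β : ℝ) (m n : ℕ) (z w : ℂ) :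
    Zc β m n z w = appellSum (fun k => (laguerreWeight β m k : ℂ)) m n z w := by
  rw [Zc, appellSum, Finset.Nat.sum_antidiagonal_eq_sum_range_succ_mk]
  refine Finset.sum_congr rfl fun k _ => ?_
  rw [neg_pow w, laguerreWeight]
  push_cast
  ring

/-- Differential recurrence: `z ∂_z Z^{(β)}_{m,n}(z,w) = (m−n) Z^{(β)}_{m,n}(z,w) − w Z^{(β)}_{m,n−1}(z,w)`. -/
theorem diff_recurrence_z (β : ℝ) (hβ : 0 ≤ β) (m n : ℕ) (hn : 1 ≤ n) (hmn : n ≤ m)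
    (z w : ℂ) :
    z * deriv (fun z' => Zc β m n z' w) z
      = (((m : ℝ) - n : ℝ) : ℂ) * Zc β m n z w - w * Zc β m (n - 1) z w := by
  obtain ⟨n, rfl⟩ := Nat.exists_eq_add_of_le' hn
  simpa [Zc_eq_appellSum] using
    diff_recurrence_z_general (fun k => (laguerreWeight β m k : ℂ)) hmn z w
end
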